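/- Let X in addition be a nonempty compact connected metrizable topological 2-manifold without boundary (every point of X has an open neighborhood homeomorphic to ℝ²). Assume m ≥ 1 and 4π < ρ < min(8π, 4π(2 + α_1)). Then Σ_{ρ,α}, endowed with the weak topology, is not contractible. -/

import Mathlib

open MeasureTheory Metric
open scoped NNReal ENNReal BigOperators Classical

variable {X : Type*}

/-- The weighted cardinality function `χ` (for `p` injective). -/
noncomputable def chi {m : ℕ} (p : Fin m → X) (α : Fin m → ℝ) (q : X) : ℝ :=
  1 + ∑ j, if p j = q then α j else 0

/-- The space of formal barycenters `Σ_{ρ,α}`, as a set of probability measures (endowed,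
as a subspace of `ProbabilityMeasure X`, with the topology of weak convergence). -/
noncomputable def Bar [MetricSpace X] [MeasurableSpace X] {m : ℕ} (p : Fin m → X)
    (α : Fin m → ℝ) (ρ : ℝ) : Set (ProbabilityMeasure X) :=
  {μ | ∃ (J : Finset X) (t : X → ℝ≥0),
    (∑ q ∈ J, t q) = 1 ∧
    4 * Real.pi * (∑ q ∈ J, chi p α q) < ρ ∧
    (μ : Measure X) = ∑ q ∈ J, ((t q : ℝ≥0∞) • Measure.dirac q)}

open Topology Filter

/-!
Suppose that the space `Σ` of barycenters is contractible. A continuous field `A` of projections on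
`X` which takes the same value at all the `p_j` extends to `Σ` by `μ ↦ ∫ A dμ`: by the bound on
`χ(J)`, a barycenter is a Dirac mass or is supported on the `p_j`, so that `∫ A dμ` is a value of
`A`. By homotopy invariance the vector bundle `range A` over `X` then has a nowhere vanishing
section.

Choose for `A` the projections to a line subbundle of `ℂ²` of degree one, pulled back from `ℙ¹(ℂ)`
by collapsing the complement of a disc which avoids the `p_j`. The first coordinate of a nowhere
vanishing section would be a continuous function `X → ℂ` with exactly one zero, of odd order. But a
continuous `f : X → ℂ` with finitely many zeros has an even number of zeros of odd order: in a chart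
`ℂ → X` this number is, modulo 2, the order of `f` at infinity, hence it is preserved by changes of
`f` with compact support in the chart. Going through finitely many charts, such changes make the
real part of `f` positive everywhere.
-/

/-! ### Parity of the order of a continuous function at a point -/

section EvenOrder

variable {T : Type*} [TopologicalSpace T] {f g : T → ℂ} {a : T}

/-- `f` has a continuous square root on a punctured neighbourhood of `a`. This is the topological
form of evenness of the order of `f` at `a`, for functions which are merely continuous. -/
def HasEvenOrderAt (f : T → ℂ) (a : T) : Prop :=
  ∃ s : T → ℂ, ∀ᶠ x in 𝓝[≠] a, ContinuousAt s x ∧ s x ^ 2 = f x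

/-- The set of points of odd order of `f`; for continuous `f` they are all zeros of `f`. -/
def oddOrderSet (f : T → ℂ) : Set T := {a | ¬ HasEvenOrderAt f a}

lemma mem_oddOrderSet : a ∈ oddOrderSet f ↔ ¬ HasEvenOrderAt f a := Iff.rfl

lemma HasEvenOrderAt.congr (hf : HasEvenOrderAt f a) (h : f =ᶠ[𝓝[≠] a] g) :
    HasEvenOrderAt g a := by
  obtain ⟨s, hs⟩ := hf
  exact ⟨s, by filter_upwards [hs, h] with x hx hfg using ⟨hx.1, hx.2.trans hfg⟩⟩

lemma hasEvenOrderAt_congr (h : f =ᶠ[𝓝[≠] a] g) :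
    HasEvenOrderAt f a ↔ HasEvenOrderAt g a :=
  ⟨fun hf => hf.congr h, fun hg => hg.congr h.symm⟩

lemma HasEvenOrderAt.mul (hf : HasEvenOrderAt f a) (hg : HasEvenOrderAt g a) :
    HasEvenOrderAt (fun x => f x * g x) a := by
  obtain ⟨s, hs⟩ := hf
  obtain ⟨t, ht⟩ := hg
  refine ⟨fun x => s x * t x, ?_⟩
  filter_upwards [hs, ht] with x hsx htx
  exact ⟨hsx.1.mul htx.1, by rw [mul_pow, hsx.2, htx.2]⟩

lemma HasEvenOrderAt.inv (hf : HasEvenOrderAt f a) (h0 : ∀ᶠ x in 𝓝[≠] a, f x ≠ 0) :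
    HasEvenOrderAt (fun x => (f x)⁻¹) a := by
  obtain ⟨s, hs⟩ := hf
  refine ⟨fun x => (s x)⁻¹, ?_⟩
  filter_upwards [hs, h0] with x hsx hx
  have hs0 : s x ≠ 0 := fun h => hx (by rw [← hsx.2, h, sq, zero_mul])
  exact ⟨hsx.1.inv₀ hs0, by rw [inv_pow, hsx.2]⟩

lemma HasEvenOrderAt.mul_right_iff (hg : HasEvenOrderAt g a) (h0 : ∀ᶠ x in 𝓝[≠] a, g x ≠ 0) :
    HasEvenOrderAt (fun x => f x * g x) a ↔ HasEvenOrderAt f a := by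
  refine ⟨fun h => (h.mul (hg.inv h0)).congr ?_, fun h => h.mul hg⟩
  filter_upwards [h0] with x hx using mul_inv_cancel_right₀ hx (f x)

lemma hasEvenOrderAt_of_ne_zero (hf : ∀ᶠ x in 𝓝 a, ContinuousAt f x) (h0 : f a ≠ 0) :
    HasEvenOrderAt f a := by
  obtain ⟨c, hc⟩ := IsAlgClosed.exists_pow_nat_eq (f a) zero_lt_two
  have hslit : ∀ᶠ x in 𝓝 a, f x / f a ∈ Complex.slitPlane :=
    (hf.self_of_nhds.div_const (f a)).eventually_mem
      (Complex.isOpen_slitPlane.mem_nhds (by rw [div_self h0]; exact Complex.one_mem_slitPlane))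
  refine ⟨fun x => c * (f x / f a) ^ (1 / 2 : ℂ), ?_⟩
  filter_upwards [nhdsWithin_le_nhds hf, nhdsWithin_le_nhds hslit] with x hx hxs
  refine ⟨continuousAt_const.mul ((hx.div_const (f a)).cpow continuousAt_const hxs), ?_⟩
  rw [mul_pow, hc, one_div, show (2 : ℂ) = (2 : ℕ) by norm_num,
    Complex.cpow_nat_inv_pow _ two_ne_zero, mul_div_cancel₀ _ h0]

lemma oddOrderSet_subset_zeros (hf : Continuous f) : oddOrderSet f ⊆ {a | f a = 0} := fun _ ha =>
  of_not_not fun h0 => ha (hasEvenOrderAt_of_ne_zero (.of_forall fun _ => hf.continuousAt) h0)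

lemma hasEvenOrderAt_comp_iff {Y : Type*} [TopologicalSpace Y]
    {ι : Y → T} (hι : IsOpenEmbedding ι) (b : Y) :
    HasEvenOrderAt (f ∘ ι) b ↔ HasEvenOrderAt f (ι b) := by
  have hmap : map ι (𝓝[≠] b) = 𝓝[≠] ι b := by
    have hpre : ({b}ᶜ : Set Y) = ι ⁻¹' {ι b}ᶜ := by ext; simp [hι.injective.eq_iff]
    rw [hpre, hι.map_nhdsWithin_preimage_eq]
  refine ⟨fun ⟨s, hs⟩ => ⟨Function.extend ι s 0, ?_⟩, fun ⟨s, hs⟩ => ⟨s ∘ ι, ?_⟩⟩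
  · rw [← hmap, eventually_map]
    filter_upwards [hs] with y hy
    rw [← hι.continuousAt_iff, hι.injective.extend_apply]
    exact ⟨by simpa only [Function.extend_comp hι.injective] using hy.1, hy.2⟩
  · rw [← hmap, eventually_map] at hs
    filter_upwards [hs] with y hy using ⟨hι.continuousAt_iff.2 hy.1, hy.2⟩

end EvenOrder

lemma not_hasEvenOrderAt_id_zero : ¬ HasEvenOrderAt (fun z : ℂ => z) 0 := by
  rintro ⟨s, hs⟩
  obtain ⟨r, hr, hs⟩ := Metric.nhdsWithin_basis_ball.eventually_iff.1 hs
  set S := sphere (0 : ℂ) (r / 2)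
  have hS : ∀ z ∈ S, z ∈ ball 0 r ∩ {0}ᶜ := by
    intro z hz
    rw [mem_sphere_zero_iff_norm] at hz
    exact ⟨by rw [mem_ball_zero_iff, hz]; linarith,
      norm_ne_zero_iff.1 (by rw [hz]; positivity)⟩
  have hneg : ∀ z ∈ S, -z ∈ S := by simp [S]
  have hcont : ContinuousOn s S := fun z hz => (hs (hS z hz)).1.continuousWithinAt
  have hsq : ∀ z ∈ S, s z ^ 2 = z := fun z hz => (hs (hS z hz)).2
  have hs0 : ∀ z ∈ S, s z ≠ 0 := fun z hz h => (hS z hz).2 (by simpa [h] using (hsq z hz).symm)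
  have hS_conn : IsPreconnected S :=
    isPreconnected_sphere (by rw [Complex.rank_real_complex]; norm_num) 0 (r / 2)
  have key : ∃ c : ℂ, c ^ 2 = -1 ∧ ∀ z ∈ S, s (-z) = c * s z := by
    have hI : ∀ z ∈ S, Complex.I * s z ≠ 0 := fun z hz => mul_ne_zero Complex.I_ne_zero (hs0 z hz)
    rcases hS_conn.eq_or_eq_neg_of_sq_eq (hcont.comp continuousOn_neg hneg)
      (continuousOn_const.mul hcont)
      (fun z hz => by simp [mul_pow, hsq z hz, hsq _ (hneg z hz)])
      (fun {z} hz => hI z hz) with h | h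
    · exact ⟨Complex.I, Complex.I_sq, h⟩
    · exact ⟨-Complex.I, by simp, fun z hz => (h hz).trans (neg_mul _ _).symm⟩
  obtain ⟨c, hc, hkey⟩ := key
  have hr2 : ((r / 2 : ℝ) : ℂ) ∈ S := by
    simp [S, abs_of_pos hr]
  have := hkey _ (hneg _ hr2)
  rw [neg_neg, hkey _ hr2, ← mul_assoc, ← sq, hc] at this
  exact hs0 _ hr2 (by linear_combination this / 2)

lemma hasEvenOrderAt_sub_zpow_iff (a : ℂ) (n : ℤ) :
    HasEvenOrderAt (fun z : ℂ => (z - a) ^ n) a ↔ Even n := by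
  have hcont : ∀ k : ℤ, ∀ z ∈ ({a}ᶜ : Set ℂ), ContinuousAt (fun z : ℂ => (z - a) ^ k) z :=
    fun k z hz => (continuousAt_id.sub continuousAt_const).zpow₀ k (.inl (sub_ne_zero.2 hz))
  have heven : ∀ k : ℤ, HasEvenOrderAt (fun z : ℂ => (z - a) ^ (2 * k)) a := fun k =>
    ⟨fun z => (z - a) ^ k, eventually_mem_nhdsWithin.mono fun z hz =>
      ⟨hcont k z hz, by rw [← zpow_natCast, ← zpow_mul, mul_comm]; rfl⟩⟩
  refine ⟨fun h => ?_, fun ⟨k, hk⟩ => by simpa only [hk, ← two_mul] using heven k⟩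
  by_contra hn
  obtain ⟨k, rfl⟩ := Int.not_even_iff_odd.1 hn
  refine not_hasEvenOrderAt_id_zero ?_
  rw [← sub_self a]
  refine (hasEvenOrderAt_comp_iff (Homeomorph.subRight a).isOpenEmbedding a).1 ?_
  refine (h.mul (heven (-k))).congr (eventually_mem_nhdsWithin.mono fun z hz => ?_)
  have hz : z - a ≠ 0 := sub_ne_zero.2 hz
  calc (z - a) ^ (2 * k + 1) * (z - a) ^ (2 * -k) = (z - a) ^ (1 : ℤ) := by
        rw [← zpow_add₀ hz]; ring_nf
    _ = z - a := zpow_one _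

/-! ### Parity of the number of odd zeros in the plane -/

section IsolatedZero

lemma eqOn_of_exp_eqOn {A : Type*} [TopologicalSpace A] {s : Set A} {f g : A → ℂ}
    (hs : IsPreconnected s) (hf : ContinuousOn f s) (hg : ContinuousOn g s)
    (h : ∀ x ∈ s, Complex.exp (f x) = Complex.exp (g x)) {x : A} (hx : x ∈ s) (hxfg : f x = g x) :
    Set.EqOn f g s :=
  Complex.isCoveringMap_exp.eqOn_of_comp_eqOn hs hf hg (fun y hy => Subtype.ext (h y hy)) hx hxfg

lemma add_exp_mem_ball_diff_iff {a w : ℂ} {r : ℝ} (hr : 0 < r) :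
    a + Complex.exp w ∈ ball a r \ {a} ↔ w.re < Real.log r := by
  simp [Complex.exp_ne_zero, Complex.norm_exp, Real.lt_log_iff_exp_lt hr]

variable {f : ℂ → ℂ} {a : ℂ} {r : ℝ}

lemma exists_log_comp_add_exp (hr : 0 < r) (hf : ContinuousOn f (ball a r \ {a}))
    (h0 : ∀ z ∈ ball a r \ {a}, f z ≠ 0) :
    ∃ (n : ℤ) (M : ℂ → ℂ), ContinuousOn M {w | w.re < Real.log r} ∧
      (∀ w, w.re < Real.log r → Complex.exp (M w) = f (a + Complex.exp w)) ∧
      ∀ w, w.re < Real.log r →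
        M (w + 2 * Real.pi * Complex.I) = M w + n * (2 * Real.pi * Complex.I) := by
  set H : Set ℂ := {w | w.re < Real.log r}
  have hH : Convex ℝ H := convex_halfSpace_re_lt _
  obtain ⟨w₀, hw₀⟩ : H.Nonempty := ⟨(Real.log r - 1 : ℝ), by simp [H]⟩
  have hexp : Set.MapsTo (fun w => a + Complex.exp w) H (ball a r \ {a}) := fun w hw =>
    (add_exp_mem_ball_diff_iff hr).2 hw
  have hH_sc : IsSimplyConnected H :=
    have : ContractibleSpace H := hH.contractibleSpace ⟨w₀, hw₀⟩
    inferInstanceAs (SimplyConnectedSpace H)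
  obtain ⟨M, hM, hMf⟩ := Complex.exists_continuousOn_eqOn_exp_comp hH_sc
    (isOpen_lt Complex.continuous_re continuous_const)
    (g := fun w => f (a + Complex.exp w)) (hf.comp (by fun_prop) hexp)
    (by rintro ⟨w, hw, h⟩; exact h0 _ (hexp hw) h)
  have hMf : ∀ w ∈ H, Complex.exp (M w) = f (a + Complex.exp w) := hMf
  have hshift : ∀ w ∈ H, w + 2 * Real.pi * Complex.I ∈ H := by simp [H]
  have hexp_shift : ∀ w ∈ H,
      Complex.exp (M (w + 2 * Real.pi * Complex.I)) = Complex.exp (M w) := fun w hw => by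
    rw [hMf _ (hshift w hw), hMf w hw, Complex.exp_add, Complex.exp_two_pi_mul_I, mul_one]
  obtain ⟨n, hn⟩ := Complex.exp_eq_exp_iff_exists_int.1 (hexp_shift w₀ hw₀)
  refine ⟨n, M, hM, hMf, eqOn_of_exp_eqOn hH.isPreconnected
    (hM.comp (by fun_prop) hshift) (hM.add continuousOn_const) (fun w hw => ?_) hw₀ hn⟩
  rw [hexp_shift w hw, Complex.exp_add, Complex.exp_int_mul_two_pi_mul_I, mul_one]

lemma exists_eqOn_zpow_mul_exp (hr : 0 < r) (hf : ContinuousOn f (ball a r \ {a}))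
    (h0 : ∀ z ∈ ball a r \ {a}, f z ≠ 0) :
    ∃ (n : ℤ) (l : ℂ → ℂ), ContinuousOn l (ball a r \ {a}) ∧
      ∀ z ∈ ball a r \ {a}, f z = (z - a) ^ n * Complex.exp (l z) := by
  obtain ⟨n, M, hM, hMf, hMn⟩ := exists_log_comp_add_exp hr hf h0
  set G : ℂ → ℂ := fun w => M w - n * w
  have hG_period : ∀ w, w.re < Real.log r → ∀ k : ℤ,
      G (w + k * (2 * Real.pi * Complex.I)) = G w := by
    intro w hw k
    have hper : Function.Periodic (fun j : ℤ => G (w + j * (2 * Real.pi * Complex.I))) 1 := by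
      intro j
      have hj : (w + j * (2 * Real.pi * Complex.I)).re < Real.log r := by simpa using hw
      simp only [G, Int.cast_add, Int.cast_one, add_mul _ (1 : ℂ), one_mul, ← add_assoc, hMn _ hj]
      ring
    simpa using hper.int_mul k 0
  have hlog : ∀ z ∈ ball a r \ {a}, ∃ w, w.re < Real.log r ∧ a + Complex.exp w = z := by
    intro z hz
    have : a + Complex.exp (Complex.log (z - a)) = z := by
      rw [Complex.exp_log (sub_ne_zero.2 hz.2), add_sub_cancel]
    exact ⟨_, (add_exp_mem_ball_diff_iff hr).1 (this ▸ hz), this⟩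
  set l : ℂ → ℂ := fun z => G (Complex.log (z - a))
  have hl : ∀ w, w.re < Real.log r → l (a + Complex.exp w) = G w := by
    intro w hw
    obtain ⟨k, hk⟩ := Complex.exp_eq_exp_iff_exists_int.1 (Complex.exp_log (Complex.exp_ne_zero w))
    simp only [l, add_sub_cancel_left, hk, hG_period w hw k]
  refine ⟨n, l, fun z hz => ContinuousAt.continuousWithinAt ?_, fun z hz => ?_⟩
  · obtain ⟨w, hw, rfl⟩ := hlog z hz
    have hH : {w : ℂ | w.re < Real.log r} ∈ 𝓝 w :=
      (isOpen_lt Complex.continuous_re continuous_const).mem_nhds hw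
    have hmap : map (fun w => a + Complex.exp w) (𝓝 w) = 𝓝 (a + Complex.exp w) :=
      ((Complex.hasStrictDerivAt_exp w).const_add a).map_nhds_eq (Complex.exp_ne_zero w)
    have hG : ContinuousAt G w := (hM.continuousAt hH).sub (by fun_prop)
    rw [ContinuousAt, ← hmap, tendsto_map'_iff, hl w hw]
    exact hG.congr' (by filter_upwards [hH] with v hv using (hl v hv).symm)
  · obtain ⟨w, hw, rfl⟩ := hlog z hz
    rw [hl w hw, ← hMf w hw, add_sub_cancel_left, ← Complex.exp_int_mul, ← Complex.exp_add]
    simp [G]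

lemma hasEvenOrderAt_zpow_mul_exp_iff {n : ℤ} {l : ℂ → ℂ}
    (hl : ∀ᶠ z in 𝓝[≠] a, ContinuousAt l z) :
    HasEvenOrderAt (fun z => (z - a) ^ n * Complex.exp (l z)) a ↔ Even n := by
  rw [← hasEvenOrderAt_sub_zpow_iff a n]
  refine HasEvenOrderAt.mul_right_iff ⟨fun z => Complex.exp (l z / 2), ?_⟩
    (.of_forall fun z => Complex.exp_ne_zero _)
  filter_upwards [hl] with z hz
  exact ⟨(hz.div_const 2).cexp, by rw [← Complex.exp_nat_mul]; push_cast; ring_nf⟩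

lemma exists_nonvanishing_eq_exp (hr : 0 < r) {l : ℂ → ℂ}
    (hl : ContinuousOn l (ball a r \ {a})) :
    ∃ e : ℂ → ℂ, ContinuousOn e (ball a r) ∧ (∀ z, e z ≠ 0) ∧
      ∀ z, r / 2 ≤ dist z a → e z = Complex.exp (l z) := by
  obtain ⟨φ, hφ0, hφ1, -⟩ := exists_continuous_zero_one_of_isClosed
    (isClosed_closedBall (x := a) (ε := r / 4)) (isOpen_ball (x := a) (ε := r / 2)).isClosed_compl
    (Set.disjoint_compl_right_iff_subset.2 (closedBall_subset_ball (by linarith)))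
  refine ⟨fun z => Complex.exp (φ z * l z), fun z hz => ContinuousAt.continuousWithinAt ?_,
    fun z => Complex.exp_ne_zero _, fun z hz => ?_⟩
  · rcases eq_or_ne z a with rfl | hza
    · refine (continuousAt_const (y := (1 : ℂ))).congr ?_
      filter_upwards [closedBall_mem_nhds z (by positivity : 0 < r / 4)] with w hw
      simp [hφ0 hw]
    · have hl_at := hl.continuousAt ((isOpen_ball.sdiff isClosed_singleton).mem_nhds ⟨hz, hza⟩)
      exact ((by fun_prop : ContinuousAt (fun z => (φ z : ℂ)) z).mul hl_at).cexp
  · have hφz : φ z = 1 := hφ1 (by simpa using hz)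
    simp [hφz]

lemma exists_eq_zpow_mul_of_lt_dist (hr : 0 < r) (hf : Continuous f)
    (h0 : ∀ z ∈ ball a r \ {a}, f z ≠ 0) :
    ∃ (n : ℤ) (g : ℂ → ℂ), Continuous g ∧ (HasEvenOrderAt f a ↔ Even n) ∧
      (∀ z ∈ ball a r, g z ≠ 0) ∧ ∀ z, r / 2 < dist z a → f z = (z - a) ^ n * g z := by
  obtain ⟨n, l, hl, hfl⟩ := exists_eqOn_zpow_mul_exp hr hf.continuousOn h0
  obtain ⟨e, he, he0, hel⟩ := exists_nonvanishing_eq_exp hr hl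
  set g : ℂ → ℂ := fun z => if r / 2 < dist z a then f z / (z - a) ^ n else e z
  have hfg : ∀ z, r / 2 < dist z a → f z = (z - a) ^ n * g z := by
    intro z hz
    have : z - a ≠ 0 := sub_ne_zero.2 (dist_pos.1 (by linarith))
    simp only [g, if_pos hz]
    field_simp
  have hge : ∀ z ∈ ball a r, g z = e z := by
    intro z hz
    by_cases hza : r / 2 < dist z a
    · have hza0 : z ≠ a := dist_pos.1 (by linarith)
      have := zpow_ne_zero n (sub_ne_zero.2 hza0)
      simp only [g, if_pos hza, hfl z ⟨hz, hza0⟩, hel z hza.le]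
      field_simp
    · simp only [g, if_neg hza]
  refine ⟨n, g, continuous_iff_continuousAt.2 fun z => ?_, ?_,
    fun z hz => hge z hz ▸ he0 z, hfg⟩
  · by_cases hz : z ∈ ball a r
    · exact (he.congr hge).continuousAt (isOpen_ball.mem_nhds hz)
    · rw [mem_ball, not_lt] at hz
      have hza : z - a ≠ 0 := sub_ne_zero.2 (dist_pos.1 (by linarith))
      have hfar : ∀ᶠ w in 𝓝 z, r / 2 < dist w a :=
        (continuous_id.dist continuous_const).continuousAt.eventually_const_lt
          ((half_lt_self hr).trans_le hz)
      refine ContinuousAt.congr (f := fun w => f w / (w - a) ^ n) ?_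
        (hfar.mono fun w hw => (if_pos hw).symm)
      exact hf.continuousAt.div ((continuousAt_id.sub continuousAt_const).zpow₀ n (.inl hza))
        (zpow_ne_zero n hza)
  · have hpunct : ball a r \ {a} ∈ 𝓝[≠] a := sdiff_mem_nhdsWithin_compl (ball_mem_nhds a hr) _
    rw [hasEvenOrderAt_congr (eventually_of_mem hpunct hfl)]
    exact hasEvenOrderAt_zpow_mul_exp_iff (eventually_of_mem hpunct fun z hz =>
      hl.continuousAt ((isOpen_ball.sdiff isClosed_singleton).mem_nhds hz))

lemma exists_remove_isolated_zero (hf : Continuous f) (h0 : ∀ᶠ z in 𝓝[≠] a, f z ≠ 0) :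
    ∃ (n : ℤ) (g : ℂ → ℂ), Continuous g ∧ (HasEvenOrderAt f a ↔ Even n) ∧
      (∀ z, g z = 0 ↔ f z = 0 ∧ z ≠ a) ∧ oddOrderSet g = oddOrderSet f \ {a} ∧
      f =ᶠ[cocompact ℂ] fun z => (z - a) ^ n * g z := by
  obtain ⟨r, hr, h0⟩ := Metric.nhdsWithin_basis_ball.eventually_iff.1 h0
  obtain ⟨n, g, hg, hn, hg0, hfg⟩ := exists_eq_zpow_mul_of_lt_dist hr hf h0
  have hzero : ∀ z, g z = 0 ↔ f z = 0 ∧ z ≠ a := by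
    intro z
    by_cases hz : z ∈ ball a r
    · exact iff_of_false (hg0 z hz) fun h => h0 ⟨hz, h.2⟩ h.1
    · rw [mem_ball, not_lt] at hz
      have hza : z ≠ a := dist_pos.1 (by linarith)
      simp [hfg z (by linarith), hza, zpow_ne_zero n (sub_ne_zero.2 hza)]
  refine ⟨n, g, hg, hn, hzero, ?_, ?_⟩
  · ext z
    by_cases hz : f z = 0 ∧ z ≠ a
    · have hza : r ≤ dist z a := not_lt.1 fun h => h0 ⟨h, hz.2⟩ hz.1
      have hev : ∀ᶠ w in 𝓝 z, r / 2 < dist w a :=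
        (continuous_id.dist continuous_const).continuousAt.eventually_const_lt
          ((half_lt_self hr).trans_le hza)
      have hpow : HasEvenOrderAt (fun w => (w - a) ^ n) z := hasEvenOrderAt_of_ne_zero
        (eventually_ne_nhds hz.2 |>.mono fun w hw =>
          (continuousAt_id.sub continuousAt_const).zpow₀ n (.inl (sub_ne_zero.2 hw)))
        (zpow_ne_zero n (sub_ne_zero.2 hz.2))
      rw [Set.mem_sdiff, mem_oddOrderSet, mem_oddOrderSet,
        hasEvenOrderAt_congr (nhdsWithin_le_nhds (hev.mono hfg))]
      simp only [mul_comm (_ ^ n)]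
      rw [hpow.mul_right_iff]
      · simp [hz.2]
      · filter_upwards [nhdsWithin_le_nhds (eventually_ne_nhds hz.2)] with w hw
        exact zpow_ne_zero n (sub_ne_zero.2 hw)
    · refine iff_of_false (fun h => hz ((hzero z).1 (oddOrderSet_subset_zeros hg h)))
        fun h => hz ⟨oddOrderSet_subset_zeros hf h.1, h.2⟩
  · filter_upwards [(isCompact_closedBall a r).compl_mem_cocompact] with z hz
    exact hfg z (by linarith [not_le.1 fun h => hz (mem_closedBall.2 h)])

end IsolatedZero

section PlaneParity

variable {f g : ℂ → ℂ}

lemma exists_eq_exp_of_ne_zero (hf : Continuous f) (h0 : ∀ z, f z ≠ 0) :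
    ∃ l : ℂ → ℂ, Continuous l ∧ ∀ z, f z = Complex.exp (l z) := by
  have h_sc : IsSimplyConnected (Set.univ : Set ℂ) :=
    have : ContractibleSpace (Set.univ : Set ℂ) := convex_univ.contractibleSpace Set.univ_nonempty
    inferInstanceAs (SimplyConnectedSpace (Set.univ : Set ℂ))
  obtain ⟨l, hl, hlf⟩ := Complex.exists_continuousOn_eqOn_exp_comp h_sc isOpen_univ
    hf.continuousOn (by rintro ⟨z, -, hz⟩; exact h0 z hz)
  exact ⟨l, continuousOn_univ.1 hl, fun z => (hlf (Set.mem_univ z)).symm⟩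

lemma tendsto_inv_nhdsNE_zero_cocompact : Tendsto (fun z : ℂ => z⁻¹) (𝓝[≠] 0) (cocompact ℂ) := by
  rw [← Metric.cobounded_eq_cocompact]
  exact tendsto_inv₀_nhdsNE_zero

lemma hasEvenOrderAt_comp_inv_of_ne_zero (hf : Continuous f) (h0 : ∀ z, f z ≠ 0) :
    HasEvenOrderAt (fun z => f z⁻¹) 0 := by
  obtain ⟨l, hl, hlf⟩ := exists_eq_exp_of_ne_zero hf h0
  refine ⟨fun z => Complex.exp (l z⁻¹ / 2), eventually_mem_nhdsWithin.mono fun z hz => ⟨?_, ?_⟩⟩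
  · exact ((hl.continuousAt.comp (continuousAt_inv₀ hz)).div_const 2).cexp
  · simp only [hlf, ← Complex.exp_nat_mul]
    push_cast
    ring_nf

lemma HasEvenOrderAt.zpow_mul_comp_inv {a : ℂ} {n k : ℤ}
    (hfg : f =ᶠ[cocompact ℂ] fun z => (z - a) ^ n * g z)
    (hg : HasEvenOrderAt (fun z => z ^ k * g z⁻¹) 0) :
    HasEvenOrderAt (fun z => z ^ (n + k) * f z⁻¹) 0 := by
  have hunit : HasEvenOrderAt (fun z => (1 - a * z) ^ n) 0 := by
    have hne : ∀ᶠ z in 𝓝 (0 : ℂ), 1 - a * z ≠ 0 :=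
      ContinuousAt.eventually_ne (by fun_prop) (by simp)
    exact hasEvenOrderAt_of_ne_zero (hne.mono fun z hz =>
      ContinuousAt.zpow₀ (by fun_prop) n (.inl hz)) (by simp)
  refine (hunit.mul hg).congr ?_
  filter_upwards [tendsto_inv_nhdsNE_zero_cocompact.eventually hfg, eventually_mem_nhdsWithin]
    with z hz hz0
  have hz0 : z ≠ 0 := hz0
  rw [hz, zpow_add₀ hz0, show 1 - a * z = z * (z⁻¹ - a) by field_simp, mul_zpow]
  ring

/-- Up to parity, `k` is the order of `f` at infinity, measured at `0` in the coordinate `z⁻¹`. -/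
lemma exists_hasEvenOrderAt_zpow_mul_comp_inv (hf : Continuous f) (hf0 : {z | f z = 0}.Finite) :
    ∃ k : ℤ, (Even k ↔ Even (oddOrderSet f).ncard) ∧
      HasEvenOrderAt (fun z => z ^ k * f z⁻¹) 0 := by
  obtain ⟨Z, hZ⟩ : ∃ Z : Finset ℂ, ∀ z, z ∈ Z ↔ f z = 0 := hf0.exists_finset
  clear hf0
  induction Z using Finset.induction_on generalizing f with
  | empty =>
    have hne : ∀ z, f z ≠ 0 := fun z => by simpa using hZ z
    have hodd : oddOrderSet f = ∅ :=
      Set.subset_empty_iff.1 fun z hz => hne z (oddOrderSet_subset_zeros hf hz)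
    exact ⟨0, by simp [hodd], by simpa using hasEvenOrderAt_comp_inv_of_ne_zero hf hne⟩
  | insert a Z ha ih =>
    have hisolated : ∀ᶠ z in 𝓝[≠] a, f z ≠ 0 := by
      filter_upwards [nhdsWithin_le_nhds (Z.finite_toSet.isClosed.isOpen_compl.mem_nhds ha),
        eventually_mem_nhdsWithin] with z hzZ hza hz
      exact (Finset.mem_insert.1 ((hZ z).2 hz)).elim hza hzZ
    obtain ⟨n, g, hg, hn, hzero, hodd, hfg⟩ := exists_remove_isolated_zero hf hisolated
    have hgZ : ∀ z, z ∈ Z ↔ g z = 0 := fun z => by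
      rw [hzero, ← hZ, Finset.mem_insert]
      grind
    obtain ⟨k, hk, hgk⟩ := ih hg hgZ
    refine ⟨n + k, ?_, hgk.zpow_mul_comp_inv hfg⟩
    have hfin : (oddOrderSet f).Finite := (insert a Z).finite_toSet.subset fun z hz =>
      (hZ z).2 (oddOrderSet_subset_zeros hf hz)
    rw [Int.even_add, hk, hodd, ← hn]
    by_cases ha : HasEvenOrderAt f a
    · rw [Set.sdiff_singleton_eq_self (not_not.2 ha)]
      simp [ha]
    · rw [← Set.ncard_sdiff_singleton_add_one ha hfin, Nat.even_add_one]
      simp [ha]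

lemma even_ncard_oddOrderSet_iff_of_eventuallyEq (hf : Continuous f) (hg : Continuous g)
    (hf0 : {z | f z = 0}.Finite) (hg0 : {z | g z = 0}.Finite) (hfg : f =ᶠ[cocompact ℂ] g) :
    Even (oddOrderSet f).ncard ↔ Even (oddOrderSet g).ncard := by
  obtain ⟨k, hk, hfk⟩ := exists_hasEvenOrderAt_zpow_mul_comp_inv hf hf0
  obtain ⟨l, hl, hgl⟩ := exists_hasEvenOrderAt_zpow_mul_comp_inv hg hg0
  have hinv := tendsto_inv_nhdsNE_zero_cocompact
  have hg_ne : ∀ᶠ z in 𝓝[≠] (0 : ℂ), z ^ l * g z⁻¹ ≠ 0 := by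
    filter_upwards [hinv.eventually hg0.isCompact.compl_mem_cocompact, eventually_mem_nhdsWithin]
      with z hz hz0 using mul_ne_zero (zpow_ne_zero l hz0) hz
  have hkl : HasEvenOrderAt (fun z : ℂ => (z - 0) ^ (k - l)) 0 := by
    refine (hfk.mul (hgl.inv hg_ne)).congr ?_
    filter_upwards [hinv.eventually hfg, hg_ne, eventually_mem_nhdsWithin] with z hz hz' hz0
    rw [hz, sub_zero, zpow_sub₀ hz0]
    have := right_ne_zero_of_mul hz'
    generalize g z⁻¹ = c at this
    field_simp
  rw [hasEvenOrderAt_sub_zpow_iff, Int.even_sub] at hkl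
  rw [← hk, ← hl, hkl]

end PlaneParity

/-! ### Removing the zeros in a disc -/

section Perturbation

open Polynomial in
lemma exists_polynomial_near_eval_eq {a b ε : ℝ} (hab : a < b) {v : ℝ → ℝ}
    (hv : ContinuousOn v (Set.Icc a b)) (hvab : v a = v b) (hε : 0 < ε) :
    ∃ w : ℝ[X], w ≠ 0 ∧ w.eval a = w.eval b ∧ ∀ t ∈ Set.Icc a b, |w.eval t - v t| < ε := by
  obtain ⟨p, hp⟩ := exists_polynomial_near_of_continuousOn a b v hv (ε / 4) (by positivity)
  set k := (p.eval b - p.eval a) / (b - a)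
  set w := p - C k * (X - C a)
  have hw_eval : ∀ t, w.eval t = p.eval t - k * (t - a) := fun t => by simp [w]
  have hk : k * (b - a) = p.eval b - p.eval a := div_mul_cancel₀ _ (sub_ne_zero.2 hab.ne')
  have hw_ends : w.eval a = w.eval b := by rw [hw_eval, hw_eval, hk]; ring
  have hw_near : ∀ t ∈ Set.Icc a b, |w.eval t - v t| < 3 * ε / 4 := by
    intro t ht
    have hslope : |k * (t - a)| < ε / 2 := by
      calc |k * (t - a)| ≤ |k * (b - a)| := by
            rw [abs_mul, abs_mul]
            gcongr
            exacts [sub_nonneg.2 ht.1, ht.2]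
        _ = |(p.eval b - v b) - (p.eval a - v a)| := by rw [hk, hvab]; ring_nf
        _ < ε / 2 := by
            linarith [abs_sub (p.eval b - v b) (p.eval a - v a), hp a (Set.left_mem_Icc.2 hab.le),
              hp b (Set.right_mem_Icc.2 hab.le)]
    calc |w.eval t - v t| = |(p.eval t - v t) - k * (t - a)| := by rw [hw_eval]; ring_nf
      _ ≤ |p.eval t - v t| + |k * (t - a)| := abs_sub _ _
      _ < 3 * ε / 4 := by linarith [hp t ht]
  rcases ne_or_eq w 0 with hw | hw
  · exact ⟨w, hw, hw_ends, fun t ht => (hw_near t ht).trans (by linarith)⟩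
  · refine ⟨C (ε / 4), C_ne_zero.2 (by positivity), by simp, fun t ht => ?_⟩
    have := hw_near t ht
    rw [hw, eval_zero, zero_sub, abs_neg] at this
    rw [eval_C]
    linarith [abs_sub (ε / 4) (v t), abs_of_pos (by positivity : 0 < ε / 4)]

lemma continuousOn_comp_arg {B : Type*} [TopologicalSpace B] {w : ℝ → B}
    (hw : ContinuousOn w (Set.Icc (-Real.pi) Real.pi)) (hper : w (-Real.pi) = w Real.pi) :
    ContinuousOn (fun z : ℂ => w z.arg) {0}ᶜ := by
  have : Fact (0 < 2 * Real.pi) := ⟨Real.two_pi_pos⟩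
  have hend : -Real.pi + 2 * Real.pi = Real.pi := by ring
  have hlift : Continuous (AddCircle.liftIoc (2 * Real.pi) (-Real.pi) w) :=
    AddCircle.liftIoc_continuous (by rw [hend, hper]) (by rwa [hend])
  have heq : (fun z : ℂ => w z.arg) =
      AddCircle.liftIoc (2 * Real.pi) (-Real.pi) w ∘ (Real.Angle.coe ∘ Complex.arg) := by
    ext z
    exact (AddCircle.liftIoc_coe_apply (by rw [hend]; exact Complex.arg_mem_Ioc z)).symm
  intro z hz
  rw [heq]
  exact (hlift.continuousAt.comp (Complex.continuousAt_arg_coe_angle hz)).continuousWithinAt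

lemma finite_setOf_norm_eq_and_arg_mem {S : Set ℝ} (hS : S.Finite) (R : ℝ) :
    {z : ℂ | ‖z‖ = R ∧ z.arg ∈ S}.Finite :=
  Set.Finite.of_finite_image (hS.subset (by rintro _ ⟨z, hz, rfl⟩; exact hz.2))
    fun _ hz _ hw => Complex.ext_norm_arg (hz.1.trans hw.1.symm)

lemma exists_radial_near_sphere {f : ℂ → ℂ} (hf : Continuous f) {r ε : ℝ} (hr : 0 < r)
    (hε : 0 < ε) :
    ∃ q : ℂ → ℂ, ContinuousOn q {0}ᶜ ∧ (∀ (t : ℝ) (z : ℂ), 0 < t → q (t • z) = q z) ∧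
      (∀ z ∈ sphere (0 : ℂ) r, ‖q z - f z‖ < ε) ∧
      ∀ R : ℝ, {z | ‖z‖ = R ∧ (q z).im = 0}.Finite := by
  set v : ℝ → ℝ := fun t => (f (r * Complex.exp (t * Complex.I))).im
  have hv_ends : v (-Real.pi) = v Real.pi := by
    simp [v, Complex.exp_neg]
  -- The imaginary part is approximated by a polynomial in `arg z` to have finitely many zeros.
  obtain ⟨w, hw0, hw_ends, hw⟩ := exists_polynomial_near_eval_eq (v := v)
    (neg_lt_self Real.pi_pos) (by fun_prop) hv_ends hε
  set q : ℂ → ℂ := fun z => ((f (r * (z / ‖z‖))).re : ℂ) + w.eval z.arg * Complex.I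
  have hq_im : ∀ z, (q z).im = w.eval z.arg := fun z => by simp [q]
  refine ⟨q, ?_, fun t z ht => ?_, fun z hz => ?_, fun R => ?_⟩
  · have hre : ContinuousOn (fun z : ℂ => f (r * (z / ‖z‖))) {0}ᶜ :=
      hf.comp_continuousOn (continuousOn_const.mul (continuousOn_id.div (by fun_prop)
        fun z hz => by simpa using hz))
    have him := continuousOn_comp_arg w.continuous.continuousOn hw_ends
    exact (Complex.continuous_ofReal.comp_continuousOn
      (Complex.continuous_re.comp_continuousOn hre)).add
      ((Complex.continuous_ofReal.comp_continuousOn him).mul continuousOn_const)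
  · have : ((t * z) / ‖t * z‖ : ℂ) = z / ‖z‖ := by
      rw [norm_mul, Complex.norm_real, Real.norm_of_nonneg ht.le, Complex.ofReal_mul,
        mul_div_mul_left _ _ (Complex.ofReal_ne_zero.2 ht.ne')]
    simp only [q, Complex.real_smul, this, Complex.arg_real_mul z ht]
  · rw [mem_sphere_zero_iff_norm] at hz
    have hz_re : (r : ℂ) * (z / ‖z‖) = z := by
      rw [hz, mul_div_cancel₀ _ (Complex.ofReal_ne_zero.2 hr.ne')]
    have hz_im : v z.arg = (f z).im := by
      simp only [v, ← hz, Complex.norm_mul_exp_arg_mul_I]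
    have : q z - f z = ((w.eval z.arg - v z.arg : ℝ) : ℂ) * Complex.I := by
      apply Complex.ext <;> simp [q, hz_re, hz_im]
    rw [this, norm_mul, Complex.norm_I, mul_one, Complex.norm_real]
    exact hw _ (Set.Ioc_subset_Icc_self (Complex.arg_mem_Ioc z))
  · simp only [hq_im]
    exact finite_setOf_norm_eq_and_arg_mem (Polynomial.finite_setOfPred_isRoot hw0) R

lemma exists_continuous_mem_segment {T E : Type*} [TopologicalSpace T] [R1Space T]
    [NormedAddCommGroup E] [NormedSpace ℝ E] {f q : T → E} {V A : Set T} (hV : IsOpen V)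
    (hVc : IsCompact (closure V)) (hA : IsClosed A) (hAV : A ⊆ V) (hf : Continuous f)
    (hq : ContinuousOn q V) :
    ∃ g : T → E, Continuous g ∧ Set.EqOn g q A ∧ Set.EqOn g f Vᶜ ∧
      ∀ x ∈ V, g x ∈ segment ℝ (f x) (q x) := by
  obtain ⟨c, hcV, hcA, hc⟩ := exists_tsupport_one_of_isOpen_isClosed hV hVc hA hAV
  have hcont : Continuous fun x => c x • (q x - f x) :=
    ContinuousOn.continuous_of_tsupport_subset (s := V) (by fun_prop) hV
      ((closure_mono (Function.support_smul_subset_left _ _)).trans hcV)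
  refine ⟨fun x => f x + c x • (q x - f x), hf.add hcont, fun x hx => ?_, fun x hx => ?_,
    fun x _ => ?_⟩
  · simp [hcA hx]
  · simp [image_eq_zero_of_notMem_tsupport fun h => hx (hcV h)]
  · rw [segment_eq_image']
    exact ⟨c x, hc x, rfl⟩

variable {f : ℂ → ℂ} {K : Set ℂ}

lemma exists_radial_near_on_nhds_sphere (hf : Continuous f) (hK : IsClosed K)
    (hfK : ∀ z ∈ K, 0 < (f z).re) {r : ℝ} (hr : 0 < r)
    (hfr : ∀ z ∈ sphere (0 : ℂ) r, f z ≠ 0) :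
    ∃ (q : ℂ → ℂ) (V : Set ℂ), IsOpen V ∧ Bornology.IsBounded V ∧ sphere 0 r ⊆ V ∧
      ContinuousOn q V ∧ (∀ (t : ℝ) (z : ℂ), 0 < t → q (t • z) = q z) ∧
      (∀ R : ℝ, {z | ‖z‖ = R ∧ (q z).im = 0}.Finite) ∧
      ∀ z ∈ V, ‖q z - f z‖ < ‖f z‖ ∧ (z ∈ K → 0 < (q z).re) := by
  have hS : IsCompact (sphere (0 : ℂ) r) := isCompact_sphere 0 r
  obtain ⟨ε₁, hε₁, hfε₁⟩ := hS.exists_forall_le' hf.norm.continuousOn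
    fun z hz => norm_pos_iff.2 (hfr z hz)
  obtain ⟨ε₂, hε₂, hfε₂⟩ := (hS.inter_right hK).exists_forall_le'
    (Complex.continuous_re.comp hf).continuousOn fun z hz => hfK z hz.2
  obtain ⟨q, hq, hq_radial, hq_near, hq_fin⟩ :=
    exists_radial_near_sphere hf hr (lt_min hε₁ hε₂)
  set V : Set ℂ := {z | z ≠ 0 ∧ ‖z‖ < r + 1 ∧ ‖q z - f z‖ < ‖f z‖ ∧ (z ∈ K → 0 < (q z).re)}
  have hV : IsOpen V := by
    refine isOpen_iff_eventually.2 fun z ⟨hz0, hzr, hzf, hzK⟩ => ?_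
    have hqz : ContinuousAt q z := hq.continuousAt (isOpen_compl_singleton.mem_nhds hz0)
    have hK_near : ∀ᶠ w in 𝓝 z, w ∈ K → 0 < (q w).re := by
      by_cases hz : z ∈ K
      · have := (Complex.continuous_re.continuousAt.comp hqz).eventually_const_lt (hzK hz)
        exact this.mono fun w hw _ => hw
      · filter_upwards [hK.isOpen_compl.mem_nhds hz] with w hw h using absurd h hw
    exact (eventually_ne_nhds hz0).and <| (continuous_norm.continuousAt.eventually_lt_const hzr).and
      <| ((hqz.sub hf.continuousAt).norm.eventually_lt hf.continuousAt.norm hzf).and hK_near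
  refine ⟨q, V, hV, isBounded_ball.subset fun z hz => mem_ball_zero_iff.2 hz.2.1, fun z hz => ?_,
    hq.mono fun z hz => hz.1, hq_radial, hq_fin, fun z hz => hz.2.2⟩
  have hqz := hq_near z hz
  have hz_norm := mem_sphere_zero_iff_norm.1 hz
  refine ⟨norm_pos_iff.1 (hz_norm ▸ hr), by linarith,
    hqz.trans_le ((min_le_left _ _).trans (hfε₁ z hz)), fun hzK => ?_⟩
  have hre := (abs_le.1 (Complex.abs_re_le_norm (q z - f z))).1
  have := hfε₂ z ⟨hz, hzK⟩
  rw [Complex.sub_re] at hre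
  simp only [Function.comp_apply] at this
  linarith [min_le_right ε₁ ε₂]

lemma exists_annulus_subset {V : Set ℂ} (hV : IsOpen V) {r : ℝ} (hr : 0 < r)
    (hrV : sphere 0 r ⊆ V) {η : ℝ} (hη : 0 < η) :
    ∃ δ, 0 < δ ∧ δ ≤ η ∧ ∀ z : ℂ, r - δ ≤ ‖z‖ → ‖z‖ ≤ r + δ → z ∈ V := by
  obtain ⟨δ, hδ, hδV⟩ := (isCompact_sphere (0 : ℂ) r).exists_cthickening_subset_open hV hrV
  refine ⟨min (min δ η) (r / 2), by positivity, (min_le_left _ _).trans (min_le_right _ _),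
    fun z hz1 hz2 => hδV ?_⟩
  have hz : 0 < ‖z‖ := by linarith [min_le_right (min δ η) (r / 2)]
  refine mem_cthickening_of_dist_le z ((r / ‖z‖) • z) δ _ ?_ ?_
  · rw [mem_sphere_zero_iff_norm, norm_smul, Real.norm_of_nonneg (by positivity),
      div_mul_cancel₀ _ hz.ne']
  · have hdist : z - (r / ‖z‖) • z = ((‖z‖ - r) / ‖z‖) • z := by
      rw [sub_div, div_self hz.ne', sub_smul, one_smul]
    rw [dist_eq_norm, hdist, norm_smul, norm_div, norm_norm, div_mul_cancel₀ _ hz.ne',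
      Real.norm_eq_abs, abs_le]
    have := (min_le_left (min δ η) (r / 2)).trans (min_le_left _ _)
    constructor <;> linarith

lemma exists_perturbation_radial_on_annulus (hf : Continuous f)
    (hf0 : Bornology.IsBounded {z | f z = 0}) (hK : IsClosed K) (hfK : ∀ z ∈ K, 0 < (f z).re) :
    ∃ (g : ℂ → ℂ) (a b : ℝ), 1 < a ∧ a < b ∧ Continuous g ∧ g =ᶠ[cocompact ℂ] f ∧
      (∀ z ∈ K, 0 < (g z).re) ∧ (∀ z, a ≤ ‖z‖ → g z ≠ 0) ∧
      (∀ z, a ≤ ‖z‖ → ‖z‖ ≤ b → g ((b / ‖z‖) • z) = g z) ∧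
      {z | ‖z‖ = b ∧ (g z).im = 0}.Finite := by
  obtain ⟨r₀, hr₀, hf0⟩ := hf0.subset_ball_lt 1 0
  have hf_ne : ∀ z, r₀ ≤ ‖z‖ → f z ≠ 0 := fun z hz h =>
    (mem_ball_zero_iff.1 (hf0 h)).not_ge hz
  obtain ⟨q, V, hV, hVb, hrV, hq, hq_radial, hq_fin, hqV⟩ :=
    exists_radial_near_on_nhds_sphere hf hK hfK (r := r₀ + 1) (by linarith)
      fun z hz => hf_ne z (by rw [mem_sphere_zero_iff_norm] at hz; linarith)
  obtain ⟨δ, hδ, hδ1, hδV⟩ := exists_annulus_subset hV (by linarith) hrV (one_half_pos (α := ℝ))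
  set a := r₀ + 1 - δ
  set b := r₀ + 1 + δ
  set A : Set ℂ := {z | a ≤ ‖z‖ ∧ ‖z‖ ≤ b}
  have hA : IsClosed A := (isClosed_le continuous_const continuous_norm).inter
    (isClosed_le continuous_norm continuous_const)
  obtain ⟨g, hg, hgA, hgV, hg_seg⟩ := exists_continuous_mem_segment hV hVb.isCompact_closure hA
    (fun z hz => hδV z hz.1 hz.2) hf hq
  have hgf : g =ᶠ[cocompact ℂ] f := by
    filter_upwards [hVb.isCompact_closure.compl_mem_cocompact] with z hz
    exact hgV fun h => hz (subset_closure h)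
  refine ⟨g, a, b, by simp only [a]; linarith, by simp only [a, b]; linarith, hg, hgf,
    fun z hz => ?_, fun z hz => ?_, fun z hza hzb => ?_, ?_⟩
  · by_cases hzV : z ∈ V
    · exact (convex_halfSpace_re_gt 0).segment_subset (hfK z hz) ((hqV z hzV).2 hz) (hg_seg z hzV)
    · exact hgV hzV ▸ hfK z hz
  · have hfz := hf_ne z (by simp only [a] at hz; linarith)
    by_cases hzV : z ∈ V
    · intro hgz
      have := (convex_ball (f z) ‖f z‖).segment_subset (mem_ball_self (norm_pos_iff.2 hfz))
        (mem_ball_iff_norm.2 (hqV z hzV).1) (hg_seg z hzV)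
      simp [hgz] at this
    · exact hgV hzV ▸ hfz
  · have hz : 0 < ‖z‖ := by simp only [a] at hza; linarith
    have hbz_pos : 0 < b / ‖z‖ := div_pos (hz.trans_le hzb) hz
    have hbz : ‖(b / ‖z‖) • z‖ = b := by
      rw [norm_smul, Real.norm_of_nonneg hbz_pos.le, div_mul_cancel₀ _ hz.ne']
    rw [hgA ⟨hza, hzb⟩, hgA ⟨(hza.trans hzb).trans hbz.ge, hbz.le⟩, hq_radial _ _ hbz_pos]
  · refine (hq_fin b).subset fun z hz => ⟨hz.1, ?_⟩
    rw [← hgA ⟨by rw [hz.1]; simp only [a, b]; linarith, hz.1.le⟩]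
    exact hz.2

lemma finite_setOf_radial_interpolation_eq_zero {h : ℂ → ℂ} {a b : ℝ} (ha : 0 < a) (hab : a < b)
    (hh : ∀ z, a ≤ ‖z‖ → ‖z‖ ≤ b → h ((b / ‖z‖) • z) = h z)
    (hfin : {z | ‖z‖ = b ∧ (h z).im = 0}.Finite) :
    {z | a ≤ ‖z‖ ∧ ‖z‖ ≤ b ∧ (‖z‖ - a) • h z + ((b - ‖z‖ : ℝ) : ℂ) = 0}.Finite := by
  set Z := {z | a ≤ ‖z‖ ∧ ‖z‖ ≤ b ∧ (‖z‖ - a) • h z + ((b - ‖z‖ : ℝ) : ℂ) = 0}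
  set y : ℂ → ℂ := fun z => (b / ‖z‖) • z
  have hre : ∀ z ∈ Z, (‖z‖ - a) * (h (y z)).re + (b - ‖z‖) = 0 := fun z hz => by
    rw [hh z hz.1 hz.2.1]
    simpa using congrArg Complex.re hz.2.2
  have him : ∀ z ∈ Z, (h (y z)).im = 0 := fun z hz => by
    have hza : ‖z‖ - a ≠ 0 := fun h0 => by
      have := hre z hz
      rw [h0] at this
      linarith
    rw [hh z hz.1 hz.2.1]
    simpa [hza] using congrArg Complex.im hz.2.2
  have hy : ∀ z ∈ Z, z = (‖z‖ / b) • y z := fun z hz => by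
    have : ‖z‖ ≠ 0 := by linarith [hz.1]
    have : b ≠ 0 := by linarith
    rw [smul_smul]
    field_simp
    simp
  -- On each ray the equation is affine in `‖z‖` and not constant, so `y` is injective on `Z`.
  refine Set.Finite.of_finite_image (f := y) (hfin.subset ?_) fun z hz w hw hzw => ?_
  · rintro _ ⟨z, hz, rfl⟩
    have : ‖z‖ ≠ 0 := by linarith [hz.1]
    refine ⟨?_, him z hz⟩
    rw [norm_smul, Real.norm_of_nonneg (div_nonneg (by linarith) (norm_nonneg z)),
      div_mul_cancel₀ _ this]
  · have hz_re := hre z hz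
    have hw_re := hre w hw
    rw [← hzw] at hw_re
    have hnorm : (‖z‖ - ‖w‖) * ((h (y z)).re - 1) = 0 := by linear_combination hz_re - hw_re
    have hne : (h (y z)).re - 1 ≠ 0 := fun h1 => by
      rw [sub_eq_zero.1 h1] at hz_re
      linarith
    rw [hy z hz, hy w hw, hzw, sub_eq_zero.1 ((mul_eq_zero.1 hnorm).resolve_right hne)]

lemma exists_affine_cutoff {a b : ℝ} (hab : a < b) :
    ∃ s : ℝ → ℝ, Continuous s ∧ (∀ t, 0 ≤ s t ∧ s t ≤ 1) ∧ (∀ t ≤ a, s t = 1) ∧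
      (∀ t, b ≤ t → s t = 0) ∧ ∀ t, a ≤ t → t ≤ b → (b - a) * s t = b - t := by
  have hba : 0 < b - a := sub_pos.2 hab
  refine ⟨fun t => max 0 (min 1 ((b - t) / (b - a))), by fun_prop, fun t =>
    ⟨le_max_left _ _, max_le zero_le_one (min_le_left _ _)⟩, fun t ht => ?_, fun t ht => ?_,
    fun t hta htb => ?_⟩
  · simp [(one_le_div hba).2 (by linarith : b - a ≤ b - t)]
  · exact max_eq_left (min_le_of_right_le (div_nonpos_of_nonpos_of_nonneg (by linarith) hba.le))
  · have h1 : (b - t) / (b - a) ≤ 1 := (div_le_one hba).2 (by linarith)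
    have h0 : 0 ≤ (b - t) / (b - a) := div_nonneg (by linarith) hba.le
    simp only [min_eq_right h1, max_eq_right h0]
    field_simp

lemma exists_perturbation_pos_on_disc (hf : Continuous f)
    (hf0 : Bornology.IsBounded {z | f z = 0}) (hK : IsClosed K) (hfK : ∀ z ∈ K, 0 < (f z).re) :
    ∃ g : ℂ → ℂ, Continuous g ∧ g =ᶠ[cocompact ℂ] f ∧ {z | g z = 0}.Finite ∧
      ∀ z ∈ K ∪ closedBall 0 1, 0 < (g z).re := by
  obtain ⟨h, a, b, ha, hab, hh, hhf, hhK, hh_ne, hh_radial, hh_fin⟩ :=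
    exists_perturbation_radial_on_annulus hf hf0 hK hfK
  obtain ⟨s, hs, hs_mem, hs_near, hs_far, hs_mid⟩ := exists_affine_cutoff hab
  set g : ℂ → ℂ := fun z => (1 - s ‖z‖) • h z + (s ‖z‖ : ℂ)
  have hg_near : ∀ z, ‖z‖ ≤ a → g z = 1 := fun z hz => by simp [g, hs_near _ hz]
  have hg_far : ∀ z, b ≤ ‖z‖ → g z = h z := fun z hz => by simp [g, hs_far _ hz]
  refine ⟨g, by fun_prop, EventuallyEq.trans ?_ hhf,
    (finite_setOf_radial_interpolation_eq_zero (by linarith) hab hh_radial hh_fin).subset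
      fun z (hz : g z = 0) => ?_, fun z hz => ?_⟩
  · filter_upwards [(isCompact_closedBall (0 : ℂ) b).compl_mem_cocompact] with z hz
    exact hg_far z (by simpa using (not_le.1 fun h => hz (mem_closedBall_zero_iff.2 h)).le)
  · have hza : a ≤ ‖z‖ := le_of_not_ge fun hza => one_ne_zero ((hg_near z hza).symm.trans hz)
    have hzb : ‖z‖ ≤ b := le_of_not_ge fun hzb => hh_ne z hza ((hg_far z hzb).symm.trans hz)
    refine ⟨hza, hzb, ?_⟩
    have h1 : (b - a) * s ‖z‖ = b - ‖z‖ := hs_mid _ hza hzb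
    have h2 : (b - a) * (1 - s ‖z‖) = ‖z‖ - a := by linear_combination -h1
    rw [← h1, ← h2, mul_smul, Complex.ofReal_mul, ← Complex.real_smul, ← smul_add]
    simp only [g] at hz
    rw [hz, smul_zero]
  · rcases hz with hz | hz
    · have hre : (g z).re = (1 - s ‖z‖) * (h z).re + s ‖z‖ := by simp [g]
      rw [hre]
      rcases (hs_mem ‖z‖).1.eq_or_lt with h0 | h0
      · simpa [← h0] using hhK z hz
      · have := mul_nonneg (sub_nonneg.2 (hs_mem ‖z‖).2) (hhK z hz).le
        linarith
    · simp [hg_near z ((mem_closedBall_zero_iff.1 hz).trans ha.le)]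

end Perturbation

/-! ### Odd zeros on a closed surface -/

section Gluing

lemma finite_setOf_extend_eq {A B C : Type*} {ι : A → B} {g : A → C} {f : B → C} {c : C}
    (hι : Function.Injective ι) (hg : {a | g a = c}.Finite) (hf : {b | f b = c}.Finite) :
    {b | Function.extend ι g f b = c}.Finite := by
  refine ((hg.image ι).union hf).subset fun b (hb : Function.extend ι g f b = c) => ?_
  by_cases hbι : b ∈ Set.range ι
  · obtain ⟨a, rfl⟩ := hbι
    exact .inl ⟨a, (hι.extend_apply g f a).symm.trans hb, rfl⟩
  · exact .inr ((Function.extend_apply' g f b hbι).symm.trans hb)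

variable {T Y B : Type*} [TopologicalSpace T] [T2Space T] [TopologicalSpace Y]
  {ι : Y → T} {f : T → B} {g : Y → B}

lemma extend_eventuallyEq_of_notMem_range (hι : Continuous ι) (hι_inj : Function.Injective ι)
    (hgf : g =ᶠ[cocompact Y] f ∘ ι) {x : T} (hx : x ∉ Set.range ι) :
    Function.extend ι g f =ᶠ[𝓝 x] f := by
  obtain ⟨C, hC, hCg⟩ := mem_cocompact.1 hgf
  have hx' : (ι '' C)ᶜ ∈ 𝓝 x :=
    (hC.image hι).isClosed.isOpen_compl.mem_nhds fun h => hx (Set.image_subset_range ι C h)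
  filter_upwards [hx'] with y hy
  by_cases hyr : y ∈ Set.range ι
  · obtain ⟨z, rfl⟩ := hyr
    rw [hι_inj.extend_apply]
    exact hCg fun hz => hy (Set.mem_image_of_mem ι hz)
  · exact Function.extend_apply' g f y hyr

lemma continuous_extend_of_eventuallyEq [TopologicalSpace B] (hι : IsOpenEmbedding ι)
    (hf : Continuous f) (hg : Continuous g) (hgf : g =ᶠ[cocompact Y] f ∘ ι) :
    Continuous (Function.extend ι g f) := by
  refine continuous_iff_continuousAt.2 fun x => ?_
  by_cases hx : x ∈ Set.range ι
  · obtain ⟨y, rfl⟩ := hx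
    rw [← hι.continuousAt_iff, Function.extend_comp hι.injective]
    exact hg.continuousAt
  · exact hf.continuousAt.congr
      (extend_eventuallyEq_of_notMem_range hι.continuous hι.injective hgf hx).symm

end Gluing

lemma nonempty_chartedSpace_of_homeomorph {H T : Type*} [TopologicalSpace H] [TopologicalSpace T]
    (h : ∀ x : T, ∃ U : Set T, IsOpen U ∧ x ∈ U ∧ Nonempty (U ≃ₜ H)) :
    Nonempty (ChartedSpace H T) := by
  choose U hU hxU e using h
  let φ (x : T) : OpenPartialHomeomorph T H :=
    (TopologicalSpace.Opens.openPartialHomeomorphSubtypeCoe ⟨U x, hU x⟩ ⟨x, hxU x⟩).symm.trans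
      (e x).some.toOpenPartialHomeomorph
  exact ⟨{ atlas := Set.range φ
           chartAt := φ
           mem_chart_source := fun x => by simpa [φ] using hxU x
           chart_mem_atlas := Set.mem_range_self }⟩

lemma exists_isOpenEmbedding_range_subset {E T : Type*} [NormedAddCommGroup E] [NormedSpace ℝ E]
    [TopologicalSpace T] [ChartedSpace E T] {x : T} {U : Set T} (hU : U ∈ 𝓝 x) :
    ∃ ι : E → T, IsOpenEmbedding ι ∧ ι 0 = x ∧ Set.range ι ⊆ U := by
  set φ := chartAt E x
  have hx : x ∈ φ.source := mem_chart_source E x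
  have hφ : φ.target ∩ φ.symm ⁻¹' U ∈ 𝓝 (φ x) :=
    inter_mem (φ.open_target.mem_nhds (φ.map_source hx))
      ((φ.tendsto_symm hx).eventually_mem hU)
  obtain ⟨r, hr, hball⟩ := Metric.mem_nhds_iff.1 hφ
  have hmem (y : E) : OpenPartialHomeomorph.univBall (φ x) r y ∈ ball (φ x) r := by
    rw [← OpenPartialHomeomorph.univBall_target (φ x) hr]
    exact OpenPartialHomeomorph.map_source _ (by simp)
  have hsource : ((OpenPartialHomeomorph.univBall (φ x) r).trans φ.symm).source = Set.univ :=
    Set.eq_univ_of_forall fun y => by simpa using (hball (hmem y)).1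
  refine ⟨_, OpenPartialHomeomorph.isOpenEmbedding _ hsource, ?_, ?_⟩
  · simpa using φ.left_inv hx
  · rintro _ ⟨y, rfl⟩
    exact (hball (hmem y)).2

lemma exists_isOpenEmbedding_range_subset_compl {E T : Type*} [NormedAddCommGroup E]
    [NormedSpace ℝ E] [Nontrivial E] [TopologicalSpace T] [T1Space T] [Nonempty T]
    [ChartedSpace E T] {s : Set T} (hs : s.Finite) :
    ∃ ι : E → T, IsOpenEmbedding ι ∧ Set.range ι ⊆ sᶜ := by
  obtain ⟨ι₀, hι₀, -, -⟩ :=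
    exists_isOpenEmbedding_range_subset (E := E) (univ_mem (f := 𝓝 (Classical.arbitrary T)))
  have : Infinite E := Module.Free.infinite ℝ E
  have : Infinite T := .of_injective ι₀ hι₀.injective
  obtain ⟨x, hx⟩ := hs.exists_notMem
  obtain ⟨ι, hι, -, hιs⟩ :=
    exists_isOpenEmbedding_range_subset (E := E) (hs.isClosed.isOpen_compl.mem_nhds hx)
  exact ⟨ι, hι, hιs⟩

section SurfaceParity

variable {S : Type*} [TopologicalSpace S] [T2Space S] {f : S → ℂ}

lemma even_ncard_oddOrderSet_extend_iff {ι : ℂ → S} (hι : IsOpenEmbedding ι) (hf : Continuous f)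
    (hf0 : {x | f x = 0}.Finite) {g : ℂ → ℂ} (hg : Continuous g) (hg0 : {z | g z = 0}.Finite)
    (hgf : g =ᶠ[cocompact ℂ] f ∘ ι) :
    Even (oddOrderSet (Function.extend ι g f)).ncard ↔ Even (oddOrderSet f).ncard := by
  set F := Function.extend ι g f
  have hFι : F ∘ ι = g := Function.extend_comp hι.injective g f
  have h_out : oddOrderSet F \ Set.range ι = oddOrderSet f \ Set.range ι :=
    Set.ext fun x => and_congr_left fun hx => not_congr <| hasEvenOrderAt_congr <|
      nhdsWithin_le_nhds <|
        extend_eventuallyEq_of_notMem_range hι.continuous hι.injective hgf hx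
  have h_in (u : S → ℂ) : (oddOrderSet u ∩ Set.range ι).ncard = (oddOrderSet (u ∘ ι)).ncard := by
    rw [← Set.image_preimage_eq_inter_range, Set.ncard_image_of_injective _ hι.injective]
    exact congrArg Set.ncard (Set.ext fun z => not_congr (hasEvenOrderAt_comp_iff hι z).symm)
  have h_plane : Even (oddOrderSet g).ncard ↔ Even (oddOrderSet (f ∘ ι)).ncard :=
    even_ncard_oddOrderSet_iff_of_eventuallyEq hg (hf.comp hι.continuous) hg0
      (hf0.preimage hι.injective.injOn) hgf
  have hF0 : {x | F x = 0}.Finite := finite_setOf_extend_eq hι.injective hg0 hf0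
  rw [← Set.ncard_inter_add_ncard_sdiff_eq_ncard (oddOrderSet F) (Set.range ι)
      (hF0.subset (oddOrderSet_subset_zeros
        (continuous_extend_of_eventuallyEq hι hf hg hgf))),
    ← Set.ncard_inter_add_ncard_sdiff_eq_ncard (oddOrderSet f) (Set.range ι)
      (hf0.subset (oddOrderSet_subset_zeros hf)),
    Nat.even_add, Nat.even_add, h_out, h_in, h_in, hFι, h_plane]

lemma exists_perturbation_pos_on_chart {ι : ℂ → S} (hι : IsOpenEmbedding ι) (hf : Continuous f)
    (hf0 : {x | f x = 0}.Finite) {K : Set S} (hK : IsClosed K) (hfK : ∀ x ∈ K, 0 < (f x).re) :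
    ∃ g : S → ℂ, Continuous g ∧ {x | g x = 0}.Finite ∧
      (∀ x ∈ K ∪ ι '' closedBall 0 1, 0 < (g x).re) ∧
      (Even (oddOrderSet g).ncard ↔ Even (oddOrderSet f).ncard) := by
  obtain ⟨g, hg, hgf, hg0, hgK⟩ := exists_perturbation_pos_on_disc (hf.comp hι.continuous)
    (hf0.preimage hι.injective.injOn).isBounded (hK.preimage hι.continuous) fun z hz => hfK _ hz
  refine ⟨Function.extend ι g f, continuous_extend_of_eventuallyEq hι hf hg hgf,
    finite_setOf_extend_eq hι.injective hg0 hf0, fun x hx => ?_,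
    even_ncard_oddOrderSet_extend_iff hι hf hf0 hg hg0 hgf⟩
  by_cases hxι : x ∈ Set.range ι
  · obtain ⟨z, rfl⟩ := hxι
    rw [hι.injective.extend_apply]
    exact hgK z (hx.imp_right (hι.injective.mem_set_image).1)
  · rw [Function.extend_apply' g f x hxι]
    exact hfK x (hx.resolve_right fun h => hxι (Set.image_subset_range ι _ h))

theorem even_ncard_oddOrderSet [CompactSpace S] [ChartedSpace ℂ S] (hf : Continuous f)
    (hf0 : {x | f x = 0}.Finite) : Even (oddOrderSet f).ncard := by
  choose ι hι hι0 _ using fun x : S =>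
    exists_isOpenEmbedding_range_subset (E := ℂ) (univ_mem (f := 𝓝 x))
  have hball (x : S) : ι x '' closedBall 0 1 ∈ 𝓝 x := by
    have := (hι x).image_mem_nhds.2 (closedBall_mem_nhds (0 : ℂ) one_pos)
    rwa [hι0 x] at this
  have hpos (t : Finset S) : ∃ g : S → ℂ, Continuous g ∧ {x | g x = 0}.Finite ∧
      (∀ x ∈ ⋃ c ∈ t, ι c '' closedBall 0 1, 0 < (g x).re) ∧
      (Even (oddOrderSet g).ncard ↔ Even (oddOrderSet f).ncard) := by
    induction t using Finset.induction_on with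
    | empty => exact ⟨f, hf, hf0, by simp, Iff.rfl⟩
    | insert c t _ ih =>
      obtain ⟨g, hg, hg0, hgt, hparity⟩ := ih
      have hclosed : IsClosed (⋃ c ∈ t, ι c '' closedBall (0 : ℂ) 1) :=
        t.finite_toSet.isClosed_biUnion fun c _ =>
          ((isCompact_closedBall 0 1).image (hι c).continuous).isClosed
      obtain ⟨g', hg', hg'0, hg't, hparity'⟩ :=
        exists_perturbation_pos_on_chart (hι c) hg hg0 hclosed hgt
      refine ⟨g', hg', hg'0, ?_, hparity'.trans hparity⟩
      rwa [Finset.set_biUnion_insert, Set.union_comm]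
  obtain ⟨t, ht⟩ := CompactSpace.elim_nhds_subcover _ hball
  obtain ⟨g, hg, -, hg_pos, hparity⟩ := hpos t
  have hempty : oddOrderSet g = ∅ := by
    refine Set.subset_empty_iff.1 ((oddOrderSet_subset_zeros hg).trans fun x (hx : g x = 0) => ?_)
    simpa [hx] using hg_pos x (ht ▸ Set.mem_univ x)
  rw [← hparity, hempty]
  simp

end SurfaceParity

/-! ### Nowhere vanishing sections of fields of projections -/

section NonvanishingSection

variable {𝕜 V : Type*} [NontriviallyNormedField 𝕜] [NormedAddCommGroup V] [NormedSpace 𝕜 V]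

/-- A field `A` of endomorphisms of `V` over `T` has a continuous, nowhere vanishing section fixed
by `A`. If `A` takes values in projections, this is a nowhere vanishing section of the vector
bundle `⋃ₓ range (A x)` over `T`. -/
def HasNonvanishingSection {T : Type*} [TopologicalSpace T] (A : T → V →L[𝕜] V) : Prop :=
  ∃ v : T → V, Continuous v ∧ ∀ x, v x ≠ 0 ∧ A x (v x) = v x

variable {T : Type*} [TopologicalSpace T] {A B : T → V →L[𝕜] V}

lemma HasNonvanishingSection.of_norm_sub_lt_one (hA : HasNonvanishingSection A)
    (hB : Continuous B) (hB_idem : ∀ x, IsIdempotentElem (B x)) (hAB : ∀ x, ‖A x - B x‖ < 1) :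
    HasNonvanishingSection B := by
  obtain ⟨v, hv, hAv⟩ := hA
  refine ⟨fun x => B x (v x), hB.clm_apply hv, fun x => ⟨fun h => ?_, ?_⟩⟩
  · have hlt : ‖A x (v x) - B x (v x)‖ < ‖v x‖ := by
      simpa using (((A x - B x).le_opNorm (v x)).trans_lt
        (mul_lt_of_lt_one_left (norm_pos_iff.2 (hAv x).1) (hAB x)))
    simp [h, (hAv x).2] at hlt
  · exact congrArg (fun f : V →L[𝕜] V => f (v x)) (hB_idem x)

lemma hasNonvanishingSection_iff_of_homotopy {I : Type*} [TopologicalSpace I]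
    [PreconnectedSpace I] [CompactSpace T] {H : C(I, C(T, V →L[𝕜] V))}
    (hH : ∀ i x, IsIdempotentElem (H i x)) (i j : I) :
    HasNonvanishingSection (H i) ↔ HasNonvanishingSection (H j) := by
  suffices h : IsLocallyConstant fun i => HasNonvanishingSection (H i) from
    iff_of_eq (h.apply_eq_of_preconnectedSpace i j)
  refine (IsLocallyConstant.iff_eventually_eq _).2 fun i => ?_
  filter_upwards [H.continuous.continuousAt.eventually_mem (ball_mem_nhds (H i) one_pos)]
    with j hj
  have hlt (x : T) : ‖H j x - H i x‖ < 1 := by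
    rw [← dist_eq_norm]
    exact (ContinuousMap.dist_apply_le_dist x).trans_lt hj
  exact propext ⟨fun h => h.of_norm_sub_lt_one (H i).continuous (hH i) hlt, fun h =>
    h.of_norm_sub_lt_one (H j).continuous (hH j) fun x => by rw [norm_sub_rev]; exact hlt x⟩

lemma hasNonvanishingSection_comp_of_contractibleSpace {Y : Type*} [TopologicalSpace Y]
    [ContractibleSpace Y] [CompactSpace T] (D : C(T, Y)) (P : C(Y, V →L[𝕜] V))
    (hP : ∀ y, IsIdempotentElem (P y)) (hP0 : ∀ y, P y ≠ 0) : HasNonvanishingSection (P ∘ D) := by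
  obtain ⟨y₀, ⟨h⟩⟩ := id_nullhomotopic Y
  let H : C(unitInterval, C(T, V →L[𝕜] V)) :=
    ContinuousMap.curry ⟨fun q => P (h (q.1, D q.2)), by fun_prop⟩
  have hH0 : ⇑(H 0) = P ∘ D := by ext x; simp [H]
  have hH1 : ⇑(H 1) = fun _ => P y₀ := by ext x; simp [H]
  have hconst : HasNonvanishingSection fun _ : T => P y₀ := by
    obtain ⟨w, hw⟩ := DFunLike.ne_iff.1 (hP0 y₀)
    exact ⟨fun _ => P y₀ w, continuous_const, fun _ =>
      ⟨hw, congrArg (fun f : V →L[𝕜] V => f w) (hP y₀)⟩⟩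
  rw [← hH0, hasNonvanishingSection_iff_of_homotopy (fun i x => hP _) 0 1, hH1]
  exact hconst

end NonvanishingSection

lemma continuous_starProjection_span_singleton {𝕜 V T : Type*} [RCLike 𝕜] [NormedAddCommGroup V]
    [InnerProductSpace 𝕜 V] [TopologicalSpace T] {u : T → V} (hu : Continuous u)
    (hu0 : ∀ x, u x ≠ 0) : Continuous fun x => (Submodule.span 𝕜 {u x}).starProjection := by
  have hrank (x : T) : (Submodule.span 𝕜 {u x}).starProjection =
      ((‖u x‖ : 𝕜) ^ 2)⁻¹ • InnerProductSpace.rankOne 𝕜 (u x) (u x) := by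
    ext w
    simp [Submodule.starProjection_singleton, div_eq_inv_mul, mul_smul]
  simp only [hrank]
  have hnorm : Continuous fun x => ((‖u x‖ : 𝕜) ^ 2)⁻¹ :=
    ((RCLike.continuous_ofReal.comp hu.norm).pow 2).inv₀ fun x => by simpa using hu0 x
  have hrankOne : Continuous fun x => InnerProductSpace.rankOne 𝕜 (u x) (u x) :=
    (ContinuousLinearMap.smulRightL 𝕜 V V).continuous₂.comp
      (((innerSL 𝕜).continuous.comp hu).prodMk hu)
  exact hnorm.smul hrankOne

lemma mul_eq_mul_of_mem_span_pair {a b : ℂ} {w : EuclideanSpace ℂ (Fin 2)}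
    (hw : w ∈ Submodule.span ℂ {!₂[a, b]}) : w 0 * b = w 1 * a := by
  obtain ⟨c, rfl⟩ := Submodule.mem_span_singleton.1 hw
  simp only [PiLp.smul_apply, smul_eq_mul, Matrix.cons_val_zero, Matrix.cons_val_one]
  ring

lemma not_hasEvenOrderAt_zero_of_mul_eq_mul {f g h : ℂ → ℂ} (hg : Continuous g)
    (hh : Continuous h) (hg0 : g 0 ≠ 0) (hh0 : h 0 ≠ 0) (hfgh : ∀ z, f z * g z = h z * z) :
    ¬ HasEvenOrderAt f 0 := by
  intro hf
  have hg_even : HasEvenOrderAt g 0 :=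
    hasEvenOrderAt_of_ne_zero (.of_forall fun _ => hg.continuousAt) hg0
  have hh_even : HasEvenOrderAt h 0 :=
    hasEvenOrderAt_of_ne_zero (.of_forall fun _ => hh.continuousAt) hh0
  have hh_ne : ∀ᶠ z in 𝓝[≠] 0, h z ≠ 0 :=
    nhdsWithin_le_nhds (hh.continuousAt.eventually_ne hh0)
  refine not_hasEvenOrderAt_id_zero ((hh_even.mul_right_iff hh_ne).1 ?_)
  simpa only [hfgh, mul_comm] using hf.mul hg_even

section HopfField

/-- A spanning vector of the line `[z : max 0 (1 - ‖z‖)]` of `ℂ²`. It is parallel to `(1, 0)` for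
`‖z‖ ≥ 1`, so that these lines extend to any surface containing the plane. -/
noncomputable def hopfVector (z : ℂ) : EuclideanSpace ℂ (Fin 2) :=
  !₂[z, ((max 0 (1 - ‖z‖) : ℝ) : ℂ)]

/-- The orthogonal projections to the pullback of the tautological line bundle of `ℙ¹(ℂ)` under the
map which collapses the complement of the disc `ι '' closedBall 0 1` to the point `[1 : 0]`. -/
noncomputable def hopfField {S : Type*} (ι : ℂ → S) :
    S → EuclideanSpace ℂ (Fin 2) →L[ℂ] EuclideanSpace ℂ (Fin 2) :=
  Function.extend ι (fun z => (Submodule.span ℂ {hopfVector z}).starProjection)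
    fun _ => (Submodule.span ℂ {!₂[1, 0]}).starProjection

lemma continuous_hopfVector : Continuous hopfVector := by
  unfold hopfVector
  fun_prop

lemma hopfVector_ne_zero (z : ℂ) : hopfVector z ≠ 0 := by
  intro h
  have h0 : z = 0 := congrArg (fun w : EuclideanSpace ℂ (Fin 2) => w 0) h
  have h1 : hopfVector z 1 = 0 := congrArg (fun w : EuclideanSpace ℂ (Fin 2) => w 1) h
  simp [hopfVector, h0] at h1

lemma span_hopfVector_of_one_le_norm {z : ℂ} (hz : 1 ≤ ‖z‖) :
    Submodule.span ℂ {hopfVector z} = Submodule.span ℂ {!₂[1, 0]} := by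
  have hz0 : z ≠ 0 := norm_pos_iff.1 (one_pos.trans_le hz)
  have hsmul : hopfVector z = z • !₂[1, 0] := by
    ext i
    fin_cases i <;> simp [hopfVector, hz]
  rw [hsmul, Submodule.span_singleton_smul_eq hz0.isUnit]

variable {S : Type*} {ι : ℂ → S}

lemma hopfField_apply_of_notMem_range {x : S} (hx : x ∉ Set.range ι) :
    hopfField ι x = (Submodule.span ℂ {!₂[1, 0]}).starProjection :=
  Function.extend_apply' _ _ _ hx

lemma exists_hopfField_eq_starProjection (ι : ℂ → S) (x : S) :
    ∃ z, hopfField ι x = (Submodule.span ℂ {hopfVector z}).starProjection := by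
  by_cases hx : x ∈ Set.range ι
  · exact ⟨hx.choose, dif_pos hx⟩
  · refine ⟨1, ?_⟩
    simp only [hopfField_apply_of_notMem_range hx,
      span_hopfVector_of_one_le_norm (z := 1) (by simp)]

lemma isIdempotentElem_hopfField (x : S) : IsIdempotentElem (hopfField ι x) := by
  obtain ⟨z, hz⟩ := exists_hopfField_eq_starProjection ι x
  rw [hz]
  exact Submodule.isIdempotentElem_starProjection _

lemma hopfField_ne_zero (x : S) : hopfField ι x ≠ 0 := by
  obtain ⟨z, hz⟩ := exists_hopfField_eq_starProjection ι x
  have hfix : (Submodule.span ℂ {hopfVector z}).starProjection (hopfVector z) = hopfVector z :=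
    Submodule.starProjection_eq_self_iff.2 (Submodule.mem_span_singleton_self _)
  rw [hz]
  exact DFunLike.ne_iff.2 ⟨hopfVector z, fun h => hopfVector_ne_zero z (hfix.symm.trans h)⟩

variable [TopologicalSpace S] [T2Space S]

lemma continuous_hopfField (hι : IsOpenEmbedding ι) : Continuous (hopfField ι) := by
  refine continuous_extend_of_eventuallyEq hι continuous_const
    (continuous_starProjection_span_singleton continuous_hopfVector hopfVector_ne_zero) ?_
  filter_upwards [(isCompact_closedBall (0 : ℂ) 1).compl_mem_cocompact] with z hz
  have hz : 1 ≤ ‖z‖ := by simpa using (not_le.1 fun h => hz (mem_closedBall_zero_iff.2 h)).le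
  simp only [span_hopfVector_of_one_le_norm hz, Function.comp_apply]

theorem not_hasNonvanishingSection_hopfField [CompactSpace S] [ChartedSpace ℂ S]
    (hι : IsOpenEmbedding ι) : ¬ HasNonvanishingSection (hopfField ι) := by
  rintro ⟨v, hv, hAv⟩
  have h_in (z : ℂ) : v (ι z) 0 * ((max 0 (1 - ‖z‖) : ℝ) : ℂ) = v (ι z) 1 * z := by
    refine mul_eq_mul_of_mem_span_pair (Submodule.starProjection_eq_self_iff.1 ?_)
    have := (hAv (ι z)).2
    rwa [hopfField, hι.injective.extend_apply] at this
  have h_out (x : S) (hx : x ∉ Set.range ι) : v x 1 = 0 := by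
    have := (hAv x).2
    rw [hopfField_apply_of_notMem_range hx, Submodule.starProjection_eq_self_iff] at this
    simpa using (mul_eq_mul_of_mem_span_pair this).symm
  have hv_ne (x : S) (h0 : v x 0 = 0) : v x 1 ≠ 0 := fun h1 =>
    (hAv x).1 (by ext i; fin_cases i <;> assumption)
  have hcoord (i : Fin 2) : Continuous fun x => v x i := by fun_prop
  have hzeros : {x | v x 0 = 0} ⊆ {ι 0} := fun x (hx : v x 0 = 0) => by
    obtain ⟨z, rfl⟩ : x ∈ Set.range ι := of_not_not fun hxι => hv_ne x hx (h_out x hxι)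
    have hz : v (ι z) 1 * z = 0 := by rw [← h_in, hx, zero_mul]
    rw [(mul_eq_zero.1 hz).resolve_left (hv_ne _ hx), Set.mem_singleton_iff]
  have h0 : v (ι 0) 0 = 0 := by simpa using h_in 0
  have hodd : ¬ HasEvenOrderAt (fun x => v x 0) (ι 0) := by
    rw [← hasEvenOrderAt_comp_iff hι]
    exact not_hasEvenOrderAt_zero_of_mul_eq_mul (by fun_prop) ((hcoord 1).comp hι.continuous)
      (by simp) (hv_ne _ h0) h_in
  have hset : oddOrderSet (fun x => v x 0) = {ι 0} :=
    ((oddOrderSet_subset_zeros (hcoord 0)).trans hzeros).antisymm (Set.singleton_subset_iff.2 hodd)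
  have := even_ncard_oddOrderSet (hcoord 0) ((Set.finite_singleton _).subset hzeros)
  simp [hset] at this

end HopfField

/-! ### Formal barycenters -/

section WeakConvergence

variable [MeasurableSpace X] {F : Type*} [NormedAddCommGroup F] [NormedSpace ℝ F]

lemma continuous_integral_of_finiteDimensional [FiniteDimensional ℝ F] [TopologicalSpace X]
    [CompactSpace X] [OpensMeasurableSpace X] {g : X → F} (hg : Continuous g) :
    Continuous fun μ : ProbabilityMeasure X => ∫ x, g x ∂(μ : Measure X) := by
  let e := (Module.finBasis ℝ F).equivFunL
  have hint (μ : ProbabilityMeasure X) : Integrable g (μ : Measure X) :=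
    hg.integrable_of_hasCompactSupport (.of_compactSpace g)
  refine e.toHomeomorph.comp_continuous_iff.1 (continuous_pi fun i => ?_)
  let φ : F →L[ℝ] ℝ := (ContinuousLinearMap.proj i).comp e.toContinuousLinearMap
  have hφ (μ : ProbabilityMeasure X) :
      e (∫ x, g x ∂(μ : Measure X)) i = ∫ x, φ (g x) ∂(μ : Measure X) :=
    (φ.integral_comp_comm (hint μ)).symm
  change Continuous fun μ : ProbabilityMeasure X => e (∫ x, g x ∂(μ : Measure X)) i
  simp only [hφ]
  exact ProbabilityMeasure.continuous_integral_boundedContinuousFunction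
    (BoundedContinuousFunction.mkOfCompact ⟨fun x => φ (g x), φ.continuous.comp hg⟩)

lemma integral_sum_smul_dirac [CompleteSpace F] [MeasurableSingletonClass X] (J : Finset X)
    (t : X → ℝ≥0) (g : X → F) :
    ∫ x, g x ∂(∑ q ∈ J, (t q : ℝ≥0∞) • Measure.dirac q) = ∑ q ∈ J, t q • g q := by
  rw [integral_finsetSum_measure fun q _ =>
    (integrable_dirac (by simp [enorm_lt_top])).smul_measure ENNReal.coe_ne_top]
  refine Finset.sum_congr rfl fun q _ => ?_
  rw [integral_smul_measure, integral_dirac, ENNReal.coe_toReal, NNReal.smul_def]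

end WeakConvergence

section Barycenters

variable {m : ℕ} {p : Fin m → X} {α : Fin m → ℝ} {ρ : ℝ}

lemma chi_apply_of_injective (hp : Function.Injective p) (j : Fin m) :
    chi p α (p j) = 1 + α j := by
  simp [chi, hp.eq_iff]

lemma chi_of_notMem_range {q : X} (hq : q ∉ Set.range p) : chi p α q = 1 := by
  simp [chi, show ∀ j, p j ≠ q from fun j hj => hq ⟨j, hj⟩]

lemma chi_le_one (hα : ∀ j, α j ≤ 0) (q : X) : chi p α q ≤ 1 := by
  have : ∑ j, (if p j = q then α j else 0) ≤ 0 :=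
    Finset.sum_nonpos fun j _ => by split_ifs <;> simp [hα j]
  simpa [chi] using this

lemma le_one_add_chi (hp : Function.Injective p) (hρ : ρ ≤ 8 * Real.pi)
    (hρα : ∀ j, ρ ≤ 4 * Real.pi * (2 + α j)) (q : X) : ρ ≤ 4 * Real.pi * (1 + chi p α q) := by
  by_cases hq : q ∈ Set.range p
  · obtain ⟨j, rfl⟩ := hq
    rw [chi_apply_of_injective hp]
    linarith [hρα j]
  · rw [chi_of_notMem_range hq]
    linarith

lemma subset_range_or_eq_singleton_of_sum_chi_lt (hχ : ∀ q, 0 ≤ chi p α q)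
    (hρ : ∀ q, ρ ≤ 4 * Real.pi * (1 + chi p α q)) {J : Finset X}
    (hJ : 4 * Real.pi * ∑ q ∈ J, chi p α q < ρ) : ↑J ⊆ Set.range p ∨ ∃ q, J = {q} := by
  refine or_iff_not_imp_left.2 fun hJp => ?_
  obtain ⟨q, hqJ, hq⟩ := Set.not_subset.1 hJp
  refine ⟨q, Finset.eq_singleton_iff_unique_mem.2 ⟨hqJ, fun q' hq' => ?_⟩⟩
  by_contra hne
  have hpair : 1 + chi p α q' ≤ ∑ x ∈ J, chi p α x := by
    rw [← chi_of_notMem_range hq]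
    exact Finset.add_le_sum (fun x _ => hχ x) hqJ hq' (Ne.symm hne)
  exact absurd ((hρ q').trans (mul_le_mul_of_nonneg_left hpair (by positivity))) hJ.not_ge

variable [MetricSpace X] [MeasurableSpace X]

lemma diracProba_mem_Bar (hα : ∀ j, α j ≤ 0) (hρ : 4 * Real.pi < ρ) (x : X) :
    diracProba x ∈ Bar p α ρ := by
  refine ⟨{x}, fun _ => 1, by simp, ?_, by simp [diracProba]⟩
  rw [Finset.sum_singleton]
  exact (mul_le_of_le_one_right (by positivity) (chi_le_one hα x)).trans_lt hρ

lemma exists_integral_eq_apply_of_mem_Bar [BorelSpace X] {F : Type*} [NormedAddCommGroup F]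
    [NormedSpace ℝ F] [CompleteSpace F] (hχ : ∀ q, 0 ≤ chi p α q)
    (hρ : ∀ q, ρ ≤ 4 * Real.pi * (1 + chi p α q)) {g : X → F} (hg : ∀ i j, g (p i) = g (p j))
    {μ : ProbabilityMeasure X} (hμ : μ ∈ Bar p α ρ) :
    ∃ q, ∫ x, g x ∂(μ : Measure X) = g q := by
  obtain ⟨J, t, ht, hJ, hμ⟩ := hμ
  obtain ⟨q, hq⟩ : J.Nonempty := Finset.nonempty_of_sum_ne_zero (ht ▸ one_ne_zero)
  have hconst : ∀ x ∈ J, g x = g q := by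
    rcases subset_range_or_eq_singleton_of_sum_chi_lt hχ hρ hJ with hJp | ⟨q', rfl⟩
    · intro x hx
      obtain ⟨i, rfl⟩ := hJp hx
      obtain ⟨j, rfl⟩ := hJp hq
      exact hg i j
    · intro x hx
      rw [Finset.mem_singleton.1 hx, Finset.mem_singleton.1 hq]
  refine ⟨q, ?_⟩
  rw [hμ, integral_sum_smul_dirac, Finset.sum_congr rfl fun x hx => by rw [hconst x hx],
    ← Finset.sum_smul, ht, one_smul]

/-- The expectation `μ ↦ ∫ A dμ` extends `A` from the Dirac masses to all barycenters without
taking new values, so idempotency is preserved. -/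
lemma hasNonvanishingSection_of_contractibleSpace_Bar [CompactSpace X] [BorelSpace X]
    [ContractibleSpace (Bar p α ρ)] (hp : Function.Injective p) (hα : ∀ j, α j ≤ 0)
    (hρlo : 4 * Real.pi < ρ) (hρhi : ρ ≤ 8 * Real.pi) (hρα : ∀ j, ρ ≤ 4 * Real.pi * (2 + α j))
    {V : Type*} [NormedAddCommGroup V] [NormedSpace ℂ V] [FiniteDimensional ℂ V]
    {A : X → V →L[ℂ] V} (hA : Continuous A) (hA_idem : ∀ x, IsIdempotentElem (A x))
    (hA_ne : ∀ x, A x ≠ 0) (hAp : ∀ i j, A (p i) = A (p j)) : HasNonvanishingSection A := by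
  have hχ := le_one_add_chi hp hρhi hρα
  have hχ0 (q : X) : 0 ≤ chi p α q := by nlinarith [hχ q, Real.pi_pos]
  let P : C(Bar p α ρ, V →L[ℂ] V) :=
    ⟨fun μ => ∫ x, A x ∂(μ : ProbabilityMeasure X),
      (continuous_integral_of_finiteDimensional hA).comp continuous_subtype_val⟩
  let D : C(X, Bar p α ρ) :=
    ⟨fun x => ⟨diracProba x, diracProba_mem_Bar hα hρlo x⟩, continuous_diracProba.subtype_mk _⟩
  have hP (μ : Bar p α ρ) : ∃ q, P μ = A q :=
    exists_integral_eq_apply_of_mem_Bar hχ0 hχ hAp μ.2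
  have hPD : P ∘ D = A := by
    ext1 x
    simp [P, D, diracProba]
  rw [← hPD]
  refine hasNonvanishingSection_comp_of_contractibleSpace D P (fun μ => ?_) fun μ => ?_ <;>
    obtain ⟨q, hq⟩ := hP μ <;> rw [hq]
  exacts [hA_idem q, hA_ne q]

end Barycenters

theorem barycenters_surface_not_contractible_general
    [MetricSpace X] [CompactSpace X] [MeasurableSpace X] [BorelSpace X] [Nonempty X]
    (hman : ∀ x : X, ∃ U : Set X, IsOpen U ∧ x ∈ U ∧ Nonempty (U ≃ₜ (ℝ × ℝ)))
    {m : ℕ} (p : Fin m → X) (hp : Function.Injective p) (α : Fin m → ℝ) (hα : ∀ j, α j ≤ 0)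
    (ρ : ℝ) (hρlo : 4 * Real.pi < ρ) (hρhi : ρ ≤ 8 * Real.pi)
    (hρα : ∀ j, ρ ≤ 4 * Real.pi * (2 + α j)) :
    ¬ ContractibleSpace (Bar p α ρ) := by
  intro hcontr
  obtain ⟨_⟩ : Nonempty (ChartedSpace ℂ X) := nonempty_chartedSpace_of_homeomorph fun x =>
    let ⟨U, hU, hxU, ⟨e⟩⟩ := hman x
    ⟨U, hU, hxU, ⟨e.trans Complex.equivRealProdCLM.symm.toHomeomorph⟩⟩
  obtain ⟨ι, hι, hιp⟩ : ∃ ι : ℂ → X, IsOpenEmbedding ι ∧ Set.range ι ⊆ (Set.range p)ᶜ :=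
    exists_isOpenEmbedding_range_subset_compl (Set.finite_range p)
  have hfield (j : Fin m) := hopfField_apply_of_notMem_range (ι := ι) fun hj => hιp hj ⟨j, rfl⟩
  exact not_hasNonvanishingSection_hopfField hι <|
    hasNonvanishingSection_of_contractibleSpace_Bar hp hα hρlo hρhi hρα (continuous_hopfField hι)
      isIdempotentElem_hopfField hopfField_ne_zero fun i j => (hfield i).trans (hfield j).symm

/-- if `X` is moreover a nonempty compact connected topological 2-manifold
without boundary, `m ≥ 1` and `4π < ρ < min (8π) (4π(2+α_1))`, then `Σ_{ρ,α}` with the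
weak topology is not contractible. -/
theorem barycenters_surface_not_contractible
    [MetricSpace X] [CompactSpace X] [Infinite X] [MeasurableSpace X] [BorelSpace X]
    [Nonempty X] [ConnectedSpace X]
    (hman : ∀ x : X, ∃ U : Set X, IsOpen U ∧ x ∈ U ∧ Nonempty (U ≃ₜ (ℝ × ℝ)))
    {m : ℕ} (hm : 1 ≤ m) (p : Fin m → X) (hp : Function.Injective p)
    (α : Fin m → ℝ) (hα : ∀ j, -1 < α j ∧ α j < 0) (hmono : Monotone α)
    (ρ : ℝ) (hρlo : 4 * Real.pi < ρ)
    (hρhi : ρ < min (8 * Real.pi) (4 * Real.pi * (2 + α ⟨0, hm⟩))) :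
    ¬ ContractibleSpace ↥(Bar p α ρ) := by
  refine barycenters_surface_not_contractible_general hman p hp α (fun j => (hα j).2.le) ρ hρlo
    (hρhi.le.trans (min_le_left _ _)) fun j => (hρhi.le.trans (min_le_right _ _)).trans ?_
  gcongr
  exact hmono (Nat.zero_le j)
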